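/- For every real ε with 0 < ε < 1/2 and all real numbers x ≥ 1 and y with x^(1−ε)/2 ≤ y ≤ x, one has 6·y^(1/2) + 48·(x − y)^((1+ε)/2) ≤ 48·x^((1+ε)/2). -/

import Mathlib

/-!
Concavity of `x ↦ x ^ p` for `p = (1 + ε) / 2` shows that removing a tail of length `y` lowers
`B * x ^ p` by at least `B * p * y / x ^ ((1 - ε) / 2)`. A tail with `c * x ^ (1 - ε) ≤ y` satisfies
`√c * √y ≤ y / x ^ ((1 - ε) / 2)`, so this drop pays for a regret of `A * √y` as soon as
`A ≤ B * p * √c`. For `A = 6`, `B = 48`, `c = 1 / 2` this follows from `1 / 4 ≤ √(1 / 2)`.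
-/

theorem rpow_le_rpow_add_mul_sub {p x z : ℝ} (hp₀ : 0 ≤ p) (hp₁ : p ≤ 1) (hx : 0 < x)
    (hz : 0 ≤ z) : z ^ p ≤ x ^ p + p * x ^ (p - 1) * (z - x) := by
  have bernoulli : (z / x) ^ p ≤ 1 + p * (z / x - 1) := by
    have hzx : 0 ≤ z / x := by positivity
    simpa only [add_sub_cancel] using
      rpow_one_add_le_one_add_mul_self (s := z / x - 1) (by linarith) hp₀ hp₁
  calc
    z ^ p = x ^ p * (z / x) ^ p := by
      rw [← Real.mul_rpow hx.le (by positivity), mul_div_cancel₀ z hx.ne']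
    _ ≤ x ^ p * (1 + p * (z / x - 1)) := by gcongr
    _ = x ^ p + p * x ^ (p - 1) * (z - x) := by
      rw [Real.rpow_sub_one hx.ne']
      field_simp

theorem sqrt_mul_sqrt_le_div {a c y : ℝ} (ha : 0 < a) (hc : 0 ≤ c) (h : c * a ^ 2 ≤ y) :
    √c * √y ≤ y / a := by
  have hy : 0 ≤ y := le_trans (by positivity) h
  have hsqrt : √c * a ≤ √y := by
    simpa only [Real.sqrt_mul hc, Real.sqrt_sq ha.le] using Real.sqrt_le_sqrt h
  rw [le_div_iff₀ ha]
  calc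
    √c * √y * a = √c * a * √y := by ring
    _ ≤ √y * √y := by gcongr
    _ = y := Real.mul_self_sqrt hy

theorem eflh_induction_step_general_general {A B c ε x y : ℝ} (hε₀ : -1 ≤ ε) (hε₁ : ε ≤ 1)
    (hB : 0 ≤ B) (hc : 0 ≤ c) (hA : A ≤ B * ((1 + ε) / 2) * √c) (hx : 0 < x)
    (hy₁ : c * x ^ (1 - ε) ≤ y) (hy₂ : y ≤ x) :
    A * y ^ ((1 : ℝ) / 2) + B * (x - y) ^ ((1 + ε) / 2) ≤ B * x ^ ((1 + ε) / 2) := by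
  have hp : 0 ≤ (1 + ε) / 2 := by linarith
  have tangent : (x - y) ^ ((1 + ε) / 2) ≤
      x ^ ((1 + ε) / 2) - (1 + ε) / 2 * (y / x ^ ((1 - ε) / 2)) := by
    have h := rpow_le_rpow_add_mul_sub hp (by linarith) hx (sub_nonneg.2 hy₂)
    rw [show (1 + ε) / 2 - 1 = -((1 - ε) / 2) by ring, Real.rpow_neg hx.le] at h
    exact h.trans_eq (by ring)
  have long_tail : √c * √y ≤ y / x ^ ((1 - ε) / 2) := by
    refine sqrt_mul_sqrt_le_div (by positivity) hc ?_
    rwa [← Real.rpow_mul_natCast hx.le, Nat.cast_ofNat, div_mul_cancel₀ _ two_ne_zero]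
  have tail_regret : A * √y ≤ B * ((1 + ε) / 2 * (y / x ^ ((1 - ε) / 2))) := calc
    A * √y ≤ B * ((1 + ε) / 2) * √c * √y := by gcongr
    _ = B * ((1 + ε) / 2 * (√c * √y)) := by ring
    _ ≤ B * ((1 + ε) / 2 * (y / x ^ ((1 - ε) / 2))) := by gcongr
  rw [← Real.sqrt_eq_rpow]
  linarith [mul_le_mul_of_nonneg_left tangent hB]

/-- The induction-step inequality in the proof of Theorem 4.1 of the paper. -/
theorem eflh_induction_step_general (ε : ℝ) (hε : 0 < ε) (hε' : ε < 1 / 2)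
    (x y : ℝ) (hx : 1 ≤ x) (hy₁ : x ^ (1 - ε) / 2 ≤ y) (hy₂ : y ≤ x) :
    6 * y ^ ((1 : ℝ) / 2) + 48 * (x - y) ^ ((1 + ε) / 2) ≤
      48 * x ^ ((1 + ε) / 2) := by
  have hsqrt : 1 / 4 ≤ √(1 / 2 : ℝ) := Real.le_sqrt_of_sq_le (by norm_num)
  exact eflh_induction_step_general_general (c := 1 / 2) (by linarith) (by linarith)
    (by norm_num) (by norm_num) (by nlinarith) (by linarith) (by linarith) hy₂
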